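/- arXiv:2005.09424 — 2 statements merged into one kernel-verified Lean document; each statement's English description precedes it below -/
import Mathlib

section
/- Under the hypotheses of the previous implicit-function lemma (F differentiable with F'(y)y ≥ F(y), and y = ȳ(x) defined by F(y) = E_{y+x}[Φ(η)²] for x ≥ 0), the function Ψ₁(x) := E_{ȳ(x)+x}[Φ(η)²] / x is decreasing on (0,∞). -/
open MeasureTheory ProbabilityTheory Real Set

/-- Gaussian expectation with mean `b` and variance `σ`. -/
noncomputable def gE (b σ : ℝ) (f : ℝ → ℝ) : ℝ :=
  ∫ x, f x ∂(gaussianReal b σ.toNNReal)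

lemma aux_int {g : ℝ → ℝ} {C : ℝ} (hg : Continuous g) (hb : ∀ x, |g x| ≤ C * (1 + x ^ 2))
    (c : ℝ) : Integrable g (gaussianReal c 1) := by
  have h2 : Integrable (fun x : ℝ => x ^ 2) (gaussianReal c 1) := by
    have := (memLp_id_gaussianReal (μ := c) (v := 1) 2).integrable_sq
    simpa using this
  have h3 : Integrable (fun x : ℝ => C * (1 + x ^ 2)) (gaussianReal c 1) :=
    ((integrable_const _).add h2).const_mul C
  refine h3.mono' hg.aestronglyMeasurable (ae_of_all _ fun x => ?_)
  simpa using hb x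

lemma aux_int_vol {g : ℝ → ℝ} {c : ℝ} (h : Integrable g (gaussianReal c 1)) :
    Integrable (fun x => gaussianPDFReal c 1 x * g x) := by
  rw [gaussianReal_of_var_ne_zero c one_ne_zero,
    integrable_withDensity_iff_integrable_smul' (measurable_gaussianPDF c 1)
      (ae_of_all _ fun x => by simp [gaussianPDF])] at h
  simpa using h

lemma aux_pdf_refl (c c' w : ℝ) :
    gaussianPDFReal c 1 (c + c' - w) = gaussianPDFReal c' 1 w := by
  simp only [gaussianPDFReal]
  congr 3
  ring

lemma aux_pdf_le {c c' w : ℝ} (h : (w - c) ^ 2 ≤ (w - c') ^ 2) :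
    gaussianPDFReal c' 1 w ≤ gaussianPDFReal c 1 w := by
  simp only [gaussianPDFReal]
  gcongr

lemma aux_mono {g : ℝ → ℝ} {C : ℝ} (hg : Continuous g) (hb : ∀ x, |g x| ≤ C * (1 + x ^ 2))
    (hm : ∀ u v : ℝ, u ^ 2 ≤ v ^ 2 → g u ≤ g v) {c c' : ℝ} (hc : c' ^ 2 ≤ c ^ 2) :
    ∫ x, g x ∂(gaussianReal c' 1) ≤ ∫ x, g x ∂(gaussianReal c 1) := by
  have i1 := aux_int_vol (aux_int hg hb c)
  have i2 := aux_int_vol (aux_int hg hb c')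
  have j1 := i1.comp_sub_left (c + c')
  have j2 := i2.comp_sub_left (c + c')
  have e1 := integral_sub_left_eq_self (fun x => gaussianPDFReal c 1 x * g x) volume (c + c')
  have e2 := integral_sub_left_eq_self (fun x => gaussianPDFReal c' 1 x * g x) volume (c + c')
  have r2 : ∀ w, gaussianPDFReal c' 1 (c + c' - w) = gaussianPDFReal c 1 w := fun w => by
    rw [add_comm]; exact aux_pdf_refl c' c w
  simp only [aux_pdf_refl] at e1 j1
  simp only [r2] at e2 j2
  simp only [integral_gaussianReal_eq_integral_smul one_ne_zero, smul_eq_mul]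
  have key : 0 ≤ ∫ w, ((gaussianPDFReal c 1 w * g w - gaussianPDFReal c' 1 w * g w)
      + (gaussianPDFReal c' 1 w * g (c + c' - w) - gaussianPDFReal c 1 w * g (c + c' - w))) := by
    refine integral_nonneg fun w => ?_
    have : (gaussianPDFReal c 1 w * g w - gaussianPDFReal c' 1 w * g w)
      + (gaussianPDFReal c' 1 w * g (c + c' - w) - gaussianPDFReal c 1 w * g (c + c' - w))
      = (gaussianPDFReal c 1 w - gaussianPDFReal c' 1 w) * (g w - g (c + c' - w)) := by ring
    simp only [Pi.zero_apply, this]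
    have s1 : (w - c') ^ 2 - (w - c) ^ 2 = (c - c') * (2 * w - c - c') := by ring
    have s2 : w ^ 2 - (c + c' - w) ^ 2 = (c + c') * (2 * w - c - c') := by ring
    have s3 : 0 ≤ (c - c') * (c + c') := by nlinarith
    rcases lt_trichotomy ((w - c') ^ 2 - (w - c) ^ 2) 0 with h | h | h
    · have h' : w ^ 2 - (c + c' - w) ^ 2 ≤ 0 := by
        by_contra! hh
        rw [s1] at h; rw [s2] at hh
        nlinarith [mul_pos_of_neg_of_neg h (neg_lt_zero.2 hh),
          mul_nonneg s3 (sq_nonneg (2 * w - c - c'))]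
      exact mul_nonneg_of_nonpos_of_nonpos
        (sub_nonpos.2 (aux_pdf_le (by linarith))) (sub_nonpos.2 (hm _ _ (by linarith)))
    · have : gaussianPDFReal c 1 w = gaussianPDFReal c' 1 w :=
        le_antisymm (aux_pdf_le (by linarith)) (aux_pdf_le (by linarith))
      simp [this]
    · have h' : 0 ≤ w ^ 2 - (c + c' - w) ^ 2 := by
        by_contra! hh
        rw [s1] at h; rw [s2] at hh
        nlinarith [mul_pos h (neg_pos.2 hh),
          mul_nonneg s3 (sq_nonneg (2 * w - c - c'))]
      exact mul_nonneg
        (sub_nonneg.2 (aux_pdf_le (by linarith))) (sub_nonneg.2 (hm _ _ (by linarith)))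
  have k1 := i1.sub i2
  have k2 := j1.sub j2
  simp only [Pi.sub_def] at k1 k2
  rw [integral_add k1 k2, integral_sub i1 i2, integral_sub j1 j2, e1, e2] at key
  linarith

lemma aux_scale (b : ℝ) {t : ℝ} (ht : 0 < t) {f : ℝ → ℝ} (hf : Continuous f) :
    gE b (t ^ 2) f = ∫ w, f (t * w) ∂(gaussianReal (b / t) 1) := by
  have := gaussianReal_map_const_mul (μ := b / t) (v := 1) t
  rw [mul_div_cancel₀ _ ht.ne', mul_one] at this
  have h2 : (t ^ 2).toNNReal = NNReal.mk (t ^ 2) (sq_nonneg _) := by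
    ext; simp [sq_nonneg]
  rw [gE, h2, ← this, integral_map (by fun_prop) hf.aestronglyMeasurable]

lemma aux_GL (Φ : ℝ → ℝ) (hC2 : ContDiff ℝ 2 Φ) (hmono : StrictMono Φ)
    (hodd : ∀ x, Φ (-x) = -Φ x)
    (hconc : ∀ x ≠ 0, x * deriv (deriv Φ) x < 0) (b : ℝ) {s₁ s₂ : ℝ} (h1 : 0 < s₁)
    (h12 : s₁ < s₂) :
    gE b s₂ (fun u => Φ u ^ 2) / s₂ < gE b s₁ (fun u => Φ u ^ 2) / s₁ := by
  have hcont : Continuous Φ := hC2.continuous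
  have h0 : Φ 0 = 0 := by have := hodd 0; simp at this; linarith
  have hsc : StrictConcaveOn ℝ (Ici 0) Φ := by
    refine strictConcaveOn_of_deriv2_neg (convex_Ici 0) hcont.continuousOn fun x hx => ?_
    rw [interior_Ici, mem_Ioi] at hx
    have := hconc x hx.ne'
    simp only [Function.iterate_succ, Function.iterate_zero, Function.comp, id]
    exact (pos_iff_neg_of_mul_neg this).1 hx
  -- ratio
  have hr : ∀ u v : ℝ, 0 < u → u < v → u * Φ v < v * Φ u := by
    intro u v hu huv
    have hv := hu.trans huv
    have := @hsc.2 0 (by simp) v (by simpa using hv.le) hv.ne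
      (1 - u / v) (u / v) (by rw [sub_pos, div_lt_one hv]; exact huv) (by positivity)
      (by ring)
    simp only [h0, smul_eq_mul, mul_zero, zero_add, div_mul_cancel₀ _ hv.ne'] at this
    rw [div_mul_eq_mul_div, div_lt_iff₀ hv] at this
    linarith
  have habs : ∀ u, Φ u ^ 2 = Φ |u| ^ 2 := by
    intro u
    rcases abs_choice u with h | h <;> rw [h]
    rw [hodd]; ring
  have hnn : ∀ u, 0 ≤ u → 0 ≤ Φ u := fun u hu => h0 ▸ hmono.monotone hu
  have hmsq : ∀ u v : ℝ, u ^ 2 ≤ v ^ 2 → Φ u ^ 2 ≤ Φ v ^ 2 := by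
    intro u v h
    rw [habs u, habs v]
    have := hnn _ (abs_nonneg u)
    have := hmono.monotone (sq_le_sq.1 h)
    gcongr
  have hbd : ∀ u, Φ u ^ 2 ≤ Φ 1 ^ 2 * (1 + u ^ 2) := by
    intro u
    rcases le_or_gt |u| 1 with h | h
    · have := hmsq u 1 (by rw [sq_le_sq]; simpa using h)
      nlinarith [mul_nonneg (sq_nonneg (Φ 1)) (sq_nonneg u)]
    · have := hr 1 |u| one_pos h
      rw [one_mul] at this
      have h3 : Φ |u| ^ 2 ≤ (|u| * Φ 1) ^ 2 := by
        have := hnn _ (abs_nonneg u)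
        gcongr
      rw [← habs, mul_pow, sq_abs] at h3
      nlinarith [sq_nonneg (Φ 1)]
  obtain ⟨t₁, ht₁, rfl⟩ : ∃ t, 0 < t ∧ t ^ 2 = s₁ := ⟨√s₁, sqrt_pos.2 h1, sq_sqrt h1.le⟩
  have h2 := h1.trans h12
  obtain ⟨t₂, ht₂, rfl⟩ : ∃ t, 0 < t ∧ t ^ 2 = s₂ := ⟨√s₂, sqrt_pos.2 h2, sq_sqrt h2.le⟩
  have ht : t₁ < t₂ := lt_of_pow_lt_pow_left₀ 2 ht₂.le h12
  have hcsq : Continuous fun u => Φ u ^ 2 := hcont.pow 2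
  rw [aux_scale b ht₁ hcsq, aux_scale b ht₂ hcsq, ← integral_div, ← integral_div]
  have hgc : ∀ t : ℝ, Continuous fun w => Φ (t * w) ^ 2 / t ^ 2 := fun t => by fun_prop
  have hgb : ∀ t : ℝ, 0 < t → ∀ w, |Φ (t * w) ^ 2 / t ^ 2|
      ≤ (Φ 1 ^ 2 * (1 + t ^ 2) / t ^ 2) * (1 + w ^ 2) := by
    intro t ht w
    rw [abs_of_nonneg (by positivity), div_mul_eq_mul_div]
    gcongr
    refine (hbd _).trans ?_
    rw [mul_assoc]
    gcongr
    nlinarith [sq_nonneg t, sq_nonneg w]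
  have step1 : ∫ w, Φ (t₂ * w) ^ 2 / t₂ ^ 2 ∂(gaussianReal (b / t₂) 1)
      ≤ ∫ w, Φ (t₂ * w) ^ 2 / t₂ ^ 2 ∂(gaussianReal (b / t₁) 1) := by
    refine aux_mono (hgc t₂) (hgb t₂ ht₂) (fun u v h => ?_) ?_
    · have := hmsq (t₂ * u) (t₂ * v) (by rw [mul_pow, mul_pow]; gcongr)
      gcongr
    · rw [div_pow, div_pow]; gcongr
  refine step1.trans_lt ?_
  have i1 := aux_int (hgc t₁) (hgb t₁ ht₁) (b / t₁)
  have i2 := aux_int (hgc t₂) (hgb t₂ ht₂) (b / t₁)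
  have hlt : ∀ w ≠ 0, Φ (t₂ * w) ^ 2 / t₂ ^ 2 < Φ (t₁ * w) ^ 2 / t₁ ^ 2 := by
    intro w hw
    have hw' := abs_pos.2 hw
    rw [habs (t₂ * w), habs (t₁ * w), abs_mul, abs_mul, abs_of_pos ht₁, abs_of_pos ht₂,
      ← div_pow, ← div_pow]
    have a := hr (t₁ * |w|) (t₂ * |w|) (by positivity) (by gcongr)
    have a2 : Φ (t₂ * |w|) / t₂ < Φ (t₁ * |w|) / t₁ := by
      rw [div_lt_div_iff₀ ht₂ ht₁]
      have : |w| * (Φ (t₂ * |w|) * t₁) < |w| * (Φ (t₁ * |w|) * t₂) := by linarith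
      exact lt_of_mul_lt_mul_left this hw'.le
    have := hnn (t₂ * |w|) (by positivity)
    gcongr
  have i3 := i1.sub i2
  simp only [Pi.sub_def] at i3
  rw [← sub_pos, ← integral_sub i1 i2]
  refine (integral_pos_iff_support_of_nonneg ?_ i3).2 ?_
  rotate_left
  · have := nullSingletonClass_gaussianReal (μ := b / t₁) (v := 1) one_ne_zero
    have hs : ({0}ᶜ : Set ℝ) ⊆ Function.support
        (fun w => Φ (t₁ * w) ^ 2 / t₁ ^ 2 - Φ (t₂ * w) ^ 2 / t₂ ^ 2) := by
      intro w hw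
      exact (sub_pos.2 (hlt w hw)).ne'
    refine lt_of_lt_of_le ?_ (measure_mono hs)
    rw [prob_compl_eq_one_sub (measurableSet_singleton 0)]
    simp
  · intro w
    rcases eq_or_ne w 0 with rfl | hw
    · simp [h0]
    · exact (sub_pos.2 (hlt w hw)).le

/-- Lemma 6 of the paper: with `F` differentiable satisfying
`F'(y) y ≥ F(y)` and `ȳ(x)` defined implicitly by `F(ȳ(x)) = E_{b,ȳ(x)+x}[Φ²]`
for `x ≥ 0`, the function `Ψ₁(x) = E_{b,ȳ(x)+x}[Φ²]/x` is decreasing on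
`(0,∞)`. -/
theorem psi_one_decreasing
    (Φ : ℝ → ℝ) (hC2 : ContDiff ℝ 2 Φ) (hmono : StrictMono Φ)
    (hodd : ∀ x, Φ (-x) = -Φ x)
    (hconc : ∀ x ≠ 0, x * deriv (deriv Φ) x < 0)
    (hint : Integrable (fun x => |Φ x|) (gaussianReal 0 1))
    (b : ℝ) (F : ℝ → ℝ)
    (hFpos : ∀ y ∈ Ioi (0:ℝ), 0 < F y)
    (hFdiff : ∀ y ∈ Ioi (0:ℝ), DifferentiableAt ℝ F y)
    (hFconv : ∀ y ∈ Ioi (0:ℝ), F y ≤ deriv F y * y)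
    (ybar : ℝ → ℝ)
    (hypos : ∀ x ≥ (0:ℝ), 0 < ybar x)
    (hydiff : ∀ x ∈ Ioi (0:ℝ), DifferentiableAt ℝ ybar x)
    (heq : ∀ x ≥ (0:ℝ), F (ybar x) = gE b (ybar x + x) (fun u => Φ u ^ 2)) :
    StrictAntiOn (fun x => gE b (ybar x + x) (fun u => Φ u ^ 2) / x) (Ioi 0) := by
  have hFm : MonotoneOn (fun y => F y / y) (Ioi 0) := by
    have hd : ∀ y ∈ Ioi (0:ℝ), HasDerivAt (fun y => F y / y)
        ((deriv F y * y - F y * 1) / y ^ 2) y := fun y hy =>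
      (hFdiff y hy).hasDerivAt.div (hasDerivAt_id y) (ne_of_gt hy)
    refine monotoneOn_of_deriv_nonneg (convex_Ioi 0)
      (fun y hy => (hd y hy).continuousAt.continuousWithinAt)
      (fun y hy => ?_) (fun y hy => ?_)
    · rw [interior_Ioi] at hy
      exact (hd y hy).differentiableAt.differentiableWithinAt
    · rw [interior_Ioi] at hy
      rw [(hd y hy).deriv]
      have := hFconv y hy
      exact div_nonneg (by linarith) (sq_nonneg _)
  intro x₁ hx₁ x₂ hx₂ hx
  rw [mem_Ioi] at hx₁ hx₂
  have hy₁ := hypos x₁ hx₁.le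
  have hy₂ := hypos x₂ hx₂.le
  have e₁ := heq x₁ hx₁.le
  have e₂ := heq x₂ hx₂.le
  have p₁ := hFpos _ hy₁
  have p₂ := hFpos _ hy₂
  have hGL := aux_GL Φ hC2 hmono hodd hconc b (s₁ := ybar x₁ + x₁) (s₂ := ybar x₂ + x₂)
    (by positivity)
  simp only [← e₁, ← e₂] at hGL ⊢
  generalize ybar x₁ = y₁ at *
  generalize ybar x₂ = y₂ at *
  by_contra! hcon
  rw [div_le_div_iff₀ hx₁ hx₂] at hcon
  have hF : F y₁ < F y₂ := by
    by_contra! h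
    nlinarith [mul_le_mul_of_nonneg_right h hx₁.le, mul_lt_mul_of_pos_left hx p₁]
  have hy : y₁ < y₂ := by
    by_contra! h
    have := hFm hy₂ hy₁ h
    simp only at this
    rw [div_le_div_iff₀ hy₂ hy₁] at this
    nlinarith [mul_le_mul_of_nonneg_left h p₁.le, mul_lt_mul_of_pos_right hF hy₁]
  have h1 := hFm hy₁ hy₂ hy.le
  simp only at h1
  rw [div_le_div_iff₀ hy₁ hy₂] at h1
  have h2 := hGL (by linarith)
  rw [div_lt_div_iff₀ (by positivity) (by positivity)] at h2
  nlinarith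
end

section
/- (Interpolation sum rule) For every q = (q₁,…,q_ν) ∈ [0,1]^ν: E[A_N(β)] + (β²/2) Σ_{|x−y|=1} α_x α_y ∫₀¹ E E⟨(R^{(x)}₁₂ − q_x)(R^{(y)}₁₂ − q_y)⟩_t dt = Σ_{x=1}^ν α_x E_{0,1}[log cosh(b_x + βη √(Σ_{|y−x|=1} α_y q_y))] + (β²/2) Σ_{|x−y|=1} α_x α_y (1 − q_x)(1 − q_y). -/
open MeasureTheory ProbabilityTheory Real Set
open scoped BigOperators

noncomputable section

namespace DRBM

/-- `±1` spin attached to a Boolean. -/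
def sg (s : Bool) : ℝ := if s then 1 else -1

/-- Configurations: `ν` layers, each using the first `Nv x` of `N` sites. -/
abbrev Config (ν N : ℕ) := Fin ν → Fin N → Bool

/-- Quenched weights: `ξ x i j` couples site `i` of layer `x` with site `j`
of layer `x+1`. -/
abbrev Weights (ν N : ℕ) := Fin ν → Fin N → Fin N → ℝ

/-- External Gaussian fields for the interpolation. -/
abbrev Fields (ν N : ℕ) := Fin ν → Fin N → ℝ

/-- i.i.d. standard Gaussian law of the weights. -/
def μW (ν N : ℕ) : Measure (Weights ν N) :=
  Measure.pi fun _ => Measure.pi fun _ => Measure.pi fun _ => gaussianReal 0 1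

/-- i.i.d. standard Gaussian law of the fields. -/
def μF (ν N : ℕ) : Measure (Fields ν N) :=
  Measure.pi fun _ => Measure.pi fun _ => gaussianReal 0 1

/-- The deep RBM Hamiltonian
`H_N(σ) = −Σ_{x} Σ_{i<N_x, j<N_{x+1}} ξ^x_{ij}/√N σ^x_i σ^{x+1}_j`. -/
def ham (ν N : ℕ) (Nv : Fin ν → ℕ) (ξ : Weights ν N) (σ : Config ν N) : ℝ :=
  - ∑ x : Fin ν, ∑ y : Fin ν,
      (if (y : ℕ) = (x : ℕ) + 1 then
        ∑ i : Fin N, ∑ j : Fin N,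
          (if (i : ℕ) < Nv x ∧ (j : ℕ) < Nv y then
            ξ x i j / Real.sqrt N * sg (σ x i) * sg (σ y j)
          else 0)
      else 0)

/-- `Qv x = Σ_{|y−x|=1} α_y q_y`. -/
def Qv (ν : ℕ) (α q : Fin ν → ℝ) (x : Fin ν) : ℝ :=
  ∑ y : Fin ν,
    (if (y : ℕ) = (x : ℕ) + 1 ∨ (y : ℕ) + 1 = (x : ℕ) then α y * q y else 0)

/-- The one-body interpolating Hamiltonian
`H'_N(σ) = Σ_x √(Σ_{|y−x|=1} α_y q_y) Σ_i η^x_i σ^x_i`. -/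
def ham' (ν N : ℕ) (Nv : Fin ν → ℕ) (α q : Fin ν → ℝ) (η : Fields ν N)
    (σ : Config ν N) : ℝ :=
  ∑ x : Fin ν, Real.sqrt (Qv ν α q x) *
    ∑ i : Fin N, (if (i : ℕ) < Nv x then η x i * sg (σ x i) else 0)

/-- Interpolating Hamiltonian `H_{N,t} = √t H_N + √(1−t) H'_N`. -/
def hamT (ν N : ℕ) (Nv : Fin ν → ℕ) (α q : Fin ν → ℝ) (t : ℝ)
    (ξ : Weights ν N) (η : Fields ν N) (σ : Config ν N) : ℝ :=
  Real.sqrt t * ham ν N Nv ξ σ + Real.sqrt (1 - t) * ham' ν N Nv α q η σ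

/-- Bias term `Σ_x b_x Σ_i σ^x_i`. -/
def bias (ν N : ℕ) (Nv : Fin ν → ℕ) (b : Fin ν → ℝ) (σ : Config ν N) : ℝ :=
  ∑ x : Fin ν, b x * ∑ i : Fin N, (if (i : ℕ) < Nv x then sg (σ x i) else 0)

/-- Boltzmann weight of a configuration along the interpolation. -/
def bw (ν N : ℕ) (Nv : Fin ν → ℕ) (α q : Fin ν → ℝ) (β t : ℝ)
    (b : Fin ν → ℝ) (ξ : Weights ν N) (η : Fields ν N) (σ : Config ν N) : ℝ :=
  Real.exp (-β * hamT ν N Nv α q t ξ η σ + bias ν N Nv b σ)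

/-- Interpolating partition function `Z_N(t) = Ê_σ e^{−βH_{N,t}}` (the prior
`Ê` being the product of `±1` biased Bernoulli averages). -/
def Z (ν N : ℕ) (Nv : Fin ν → ℕ) (α q : Fin ν → ℝ) (β t : ℝ)
    (b : Fin ν → ℝ) (ξ : Weights ν N) (η : Fields ν N) : ℝ :=
  (∑ σ : Config ν N, bw ν N Nv α q β t b ξ η σ) / 2 ^ (ν * N)

/-- Two-replica Gibbs average `⟨f⟩_t`. -/
def gibbs2 (ν N : ℕ) (Nv : Fin ν → ℕ) (α q : Fin ν → ℝ) (β t : ℝ)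
    (b : Fin ν → ℝ) (ξ : Weights ν N) (η : Fields ν N)
    (f : Config ν N → Config ν N → ℝ) : ℝ :=
  (∑ σ : Config ν N, ∑ τ : Config ν N,
      f σ τ * bw ν N Nv α q β t b ξ η σ * bw ν N Nv α q β t b ξ η τ) /
    (∑ σ : Config ν N, bw ν N Nv α q β t b ξ η σ) ^ 2

/-- Layer-`x` overlap `R^{(x)}(σ,τ) = (σ^{(x)},τ^{(x)})/N_x`. -/
def ovl (ν N : ℕ) (Nv : Fin ν → ℕ) (x : Fin ν)
    (σ τ : Config ν N) : ℝ :=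
  (∑ i : Fin N, (if (i : ℕ) < Nv x then sg (σ x i) * sg (τ x i) else 0)) /
    (Nv x : ℝ)

/-- Sum over (unordered) adjacent pairs of layers `Σ_{|x−y|=1}`. -/
def adjSum (ν : ℕ) (F : Fin ν → Fin ν → ℝ) : ℝ :=
  ∑ x : Fin ν, ∑ y : Fin ν, (if (y : ℕ) = (x : ℕ) + 1 then F x y else 0)

lemma hasDerivAt_gpdf (x : ℝ) :
    HasDerivAt (gaussianPDFReal 0 1) (-x * gaussianPDFReal 0 1 x) x := by
  rw [gaussianPDFReal_def]
  have h : HasDerivAt (fun x : ℝ => -(x - 0) ^ 2 / (2 * ((1 : NNReal) : ℝ))) (-x) x := by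
    have h0 : HasDerivAt (fun x : ℝ => x - 0) 1 x := (hasDerivAt_id' x).sub_const 0
    have := (((h0.fun_pow 2).fun_neg).div_const (2 * ((1 : NNReal) : ℝ)))
    refine this.congr_deriv ?_
    simp; ring
  have := (h.exp).const_mul (√(2 * Real.pi * ((1 : NNReal) : ℝ)))⁻¹
  refine this.congr_deriv ?_
  ring

lemma integrable_id_gauss : Integrable (fun x : ℝ => x) (gaussianReal 0 1) := by
  have := memLp_id_gaussianReal (μ := 0) (v := 1) 1
  rw [ENNReal.coe_one] at this
  exact memLp_one_iff_integrable.1 this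

lemma integrable_gauss_iff (f : ℝ → ℝ) :
    Integrable f (gaussianReal 0 1) ↔ Integrable (fun x => f x * gaussianPDFReal 0 1 x) := by
  rw [gaussianReal_of_var_ne_zero 0 one_ne_zero,
    integrable_withDensity_iff (measurable_gaussianPDF _ _) (ae_of_all _ fun _ => gaussianPDF_lt_top)]
  simp

lemma stein (f f' : ℝ → ℝ) (hf : ∀ x, HasDerivAt f (f' x) x) (C : ℝ)
    (hb : ∀ x, |f x| ≤ C) (hc : Continuous f') (hb' : ∀ x, |f' x| ≤ C) :
    ∫ x, x * f x ∂(gaussianReal 0 1) = ∫ x, f' x ∂(gaussianReal 0 1) := by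
  have hfc : Continuous f := continuous_iff_continuousAt.2 fun x => (hf x).continuousAt
  have i1 : Integrable f (gaussianReal 0 1) :=
    Integrable.of_bound hfc.aestronglyMeasurable C (ae_of_all _ hb)
  have i2 : Integrable f' (gaussianReal 0 1) :=
    Integrable.of_bound hc.aestronglyMeasurable C (ae_of_all _ hb')
  have i3 : Integrable (fun x => x * f x) (gaussianReal 0 1) :=
    integrable_id_gauss.mul_bdd (c := C) hfc.aestronglyMeasurable (ae_of_all _ hb)
  rw [integral_gaussianReal_eq_integral_smul one_ne_zero,
    integral_gaussianReal_eq_integral_smul one_ne_zero]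
  rw [integrable_gauss_iff] at i1 i2 i3
  have := integral_mul_deriv_eq_deriv_mul_of_integrable (u := f) (u' := f')
    (v := gaussianPDFReal 0 1) (v' := fun x => -x * gaussianPDFReal 0 1 x)
    (fun x _ => hf x) (fun x _ => hasDerivAt_gpdf x) ?_ i2 i1
  · have e1 : ∀ x, gaussianPDFReal 0 1 x • (x * f x) = - (f x * (-x * gaussianPDFReal 0 1 x)) := by
      intro x; simp only [smul_eq_mul]; ring
    have e2 : ∀ x, gaussianPDFReal 0 1 x • f' x = f' x * gaussianPDFReal 0 1 x := by
      intro x; simp only [smul_eq_mul]; ring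
    simp only [e1, e2, integral_neg, this, neg_neg]
  · refine (i3.neg).congr (ae_of_all _ fun x => ?_)
    simp; ring

abbrev γ (K : Type) [Fintype K] : Measure (K → ℝ) := Measure.pi fun _ => gaussianReal 0 1

lemma mp_update {K : Type} [Fintype K] [DecidableEq K] (k : K) :
    MeasurePreserving (fun p : (K → ℝ) × ℝ => Function.update p.1 k p.2)
      ((γ K).prod (gaussianReal 0 1)) (γ K) := by
  have hm : Measurable (fun p : (K → ℝ) × ℝ => Function.update p.1 k p.2) := by
    refine measurable_pi_lambda _ fun j => ?_
    by_cases h : j = k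
    · subst h; simpa using measurable_snd
    · simp only [Function.update_of_ne h]; fun_prop
  refine ⟨hm, ?_⟩
  symm
  refine Measure.pi_eq fun s hs => ?_
  rw [Measure.map_apply hm (MeasurableSet.univ_pi hs)]
  have : (fun p : (K → ℝ) × ℝ => Function.update p.1 k p.2) ⁻¹' (univ.pi s)
      = (univ.pi (Function.update s k univ)) ×ˢ (s k) := by
    ext ⟨g, x⟩
    simp only [mem_preimage, mem_pi, mem_univ, true_imp_iff, mem_prod]
    constructor
    · intro h
      refine ⟨fun j => ?_, by simpa using h k⟩
      by_cases hj : j = k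
      · subst hj; simp
      · simpa [Function.update_of_ne hj] using h j
    · rintro ⟨h1, h2⟩ j
      by_cases hj : j = k
      · subst hj; simpa using h2
      · simpa [Function.update_of_ne hj] using h1 j
  rw [this, Measure.prod_prod, Measure.pi_pi]
  rw [← Finset.prod_erase_mul _ _ (Finset.mem_univ k), ← Finset.prod_erase_mul Finset.univ (fun i => gaussianReal 0 1 (s i)) (Finset.mem_univ k)]
  simp only [Function.update_self, measure_univ, mul_one]
  congr 1
  refine Finset.prod_congr rfl fun j hj => ?_
  rw [Function.update_of_ne (Finset.ne_of_mem_erase hj)]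

lemma integrable_coord {K : Type} [Fintype K] (k : K) :
    Integrable (fun g : K → ℝ => g k) (γ K) :=
  (measurePreserving_eval (fun _ : K => gaussianReal 0 1) k).integrable_comp_of_integrable
    integrable_id_gauss

lemma stein_pi {K : Type} [Fintype K] [DecidableEq K] (k : K) (f f' : (K → ℝ) → ℝ)
    (hf : ∀ g x, HasDerivAt (fun x => f (Function.update g k x)) (f' (Function.update g k x)) x)
    (hfc : Continuous f) (C : ℝ) (hb : ∀ g, |f g| ≤ C) (hc : Continuous f')
    (hb' : ∀ g, |f' g| ≤ C) :
    ∫ g, g k * f g ∂(γ K) = ∫ g, f' g ∂(γ K) := by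
  have i2 : Integrable f' (γ K) :=
    Integrable.of_bound hc.aestronglyMeasurable C (ae_of_all _ hb')
  have i3 : Integrable (fun g => g k * f g) (γ K) :=
    (integrable_coord k).mul_bdd (c := C) hfc.aestronglyMeasurable (ae_of_all _ hb)
  have mp := mp_update k
  have key : ∀ F : (K → ℝ) → ℝ, Integrable F (γ K) →
      ∫ g, F g ∂(γ K) = ∫ g, ∫ x, F (Function.update g k x) ∂(gaussianReal 0 1) ∂(γ K) := by
    intro F hF
    rw [← mp.map_eq, integral_map mp.measurable.aemeasurable (by rw [mp.map_eq]; exact hF.1),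
      mp.map_eq]
    exact integral_prod _ (mp.integrable_comp_of_integrable hF)
  rw [key _ i2, key _ i3]
  congr 1; ext g
  have hup : Continuous (fun x : ℝ => Function.update g k x) := continuous_const.update k continuous_id
  have := stein (fun x => f (Function.update g k x)) (fun x => f' (Function.update g k x)) (hf g) C
    (fun x => hb _) (hc.comp hup) (fun x => hb' _)
  simpa using this

section abs
set_option linter.unusedSectionVars false
variable {S : Type} [Fintype S] [Nonempty S]

def G (e : S → ℝ) (f : S → ℝ) : ℝ := (∑ σ, f σ * exp (e σ)) / ∑ σ, exp (e σ)

def G2 (e : S → ℝ) (f : S → S → ℝ) : ℝ :=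
  (∑ σ, ∑ τ, f σ τ * exp (e σ) * exp (e τ)) / (∑ σ, exp (e σ)) ^ 2

lemma Zpos (e : S → ℝ) : 0 < ∑ σ, exp (e σ) :=
  Finset.sum_pos (fun _ _ => exp_pos _) Finset.univ_nonempty

lemma G_mul (e : S → ℝ) (f g : S → ℝ) : G e f * G e g = G2 e (fun σ τ => f σ * g τ) := by
  unfold G G2
  rw [div_mul_div_comm, Finset.sum_mul_sum, sq]
  congr 1
  refine Finset.sum_congr rfl fun σ _ => Finset.sum_congr rfl fun τ _ => ?_
  ring

lemma G_one (e : S → ℝ) : G e (fun _ => 1) = 1 := by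
  unfold G; simp only [one_mul]; exact div_self (Zpos e).ne'

lemma G_eq (e : S → ℝ) (f : S → ℝ) : G e f = G2 e (fun σ _ => f σ) := by
  have := G_mul e f (fun _ => 1)
  simpa [G_one] using this

lemma G2_sum {ι : Type} (s : Finset ι) (e : S → ℝ) (f : ι → S → S → ℝ) :
    G2 e (fun σ τ => ∑ i ∈ s, f i σ τ) = ∑ i ∈ s, G2 e (f i) := by
  have e1 : ∀ i, G2 e (f i) = ∑ σ, ∑ τ, f i σ τ * exp (e σ) * exp (e τ) / (∑ σ, exp (e σ)) ^ 2 := by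
    intro i; unfold G2; simp only [Finset.sum_div]
  simp only [e1]
  rw [Finset.sum_comm]
  unfold G2
  rw [Finset.sum_div]
  refine Finset.sum_congr rfl fun σ _ => ?_
  rw [Finset.sum_comm, Finset.sum_div]
  refine Finset.sum_congr rfl fun τ _ => ?_
  rw [Finset.sum_mul, Finset.sum_mul, Finset.sum_div]

lemma G2_mul (e : S → ℝ) (c : ℝ) (f : S → S → ℝ) :
    G2 e (fun σ τ => c * f σ τ) = c * G2 e f := by
  unfold G2
  rw [← mul_div_assoc, Finset.mul_sum]
  congr 1
  refine Finset.sum_congr rfl fun σ _ => ?_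
  rw [Finset.mul_sum]
  refine Finset.sum_congr rfl fun τ _ => ?_
  ring

lemma G2_sub (e : S → ℝ) (f g : S → S → ℝ) :
    G2 e (fun σ τ => f σ τ - g σ τ) = G2 e f - G2 e g := by
  unfold G2
  rw [← sub_div]
  congr 1
  simp only [sub_mul, Finset.sum_sub_distrib]

lemma G2_const (e : S → ℝ) (c : ℝ) : G2 e (fun _ _ => c) = c := by
  have := G2_mul e c (fun _ _ => 1)
  rw [← G_eq e (fun _ => 1), G_one] at this
  simpa using this

lemma G2_bound (e : S → ℝ) (f : S → S → ℝ) (C : ℝ) (h : ∀ σ τ, |f σ τ| ≤ C) :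
    |G2 e f| ≤ C := by
  unfold G2
  have hZ := Zpos e
  rw [abs_div, abs_of_pos (pow_pos hZ 2), div_le_iff₀ (pow_pos hZ 2), sq, Finset.sum_mul_sum,
    Finset.mul_sum]
  refine (Finset.abs_sum_le_sum_abs _ _).trans (Finset.sum_le_sum fun σ _ => ?_)
  rw [Finset.mul_sum]
  refine (Finset.abs_sum_le_sum_abs _ _).trans (Finset.sum_le_sum fun τ _ => ?_)
  rw [abs_mul, abs_mul, abs_of_pos (exp_pos _), abs_of_pos (exp_pos _), mul_assoc]
  exact mul_le_mul_of_nonneg_right (h σ τ) (by positivity)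

lemma G2_bdd (f : S → S → ℝ) : ∃ C, ∀ e : S → ℝ, |G2 e f| ≤ C := by
  refine ⟨∑ σ, ∑ τ, |f σ τ|, fun e => G2_bound e f _ fun σ τ => ?_⟩
  exact (Finset.single_le_sum (f := fun τ => |f σ τ|) (fun _ _ => abs_nonneg _) (Finset.mem_univ τ)).trans
    (Finset.single_le_sum (f := fun σ => ∑ τ, |f σ τ|)
      (fun _ _ => Finset.sum_nonneg fun _ _ => abs_nonneg _) (Finset.mem_univ σ))

lemma G2_cont (f : S → S → ℝ) : Continuous (fun e : S → ℝ => G2 e f) := by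
  unfold G2
  refine Continuous.div (by fun_prop) (by fun_prop) fun e => (pow_pos (Zpos e) 2).ne'

lemma G_cont (f : S → ℝ) : Continuous (fun e : S → ℝ => G e f) := by
  simp only [G_eq]; exact G2_cont _

lemma L_cont : Continuous (fun e : S → ℝ => log (∑ σ, exp (e σ))) :=
  Continuous.log (by fun_prop) fun e => (Zpos e).ne'

lemma L_bound (e : S → ℝ) :
    |log (∑ σ, exp (e σ))| ≤ ∑ σ, |e σ| + log (Fintype.card S) := by
  have hle : ∀ σ, |e σ| ≤ ∑ σ, |e σ| := fun σ =>
    Finset.single_le_sum (f := fun σ => |e σ|) (fun _ _ => abs_nonneg _) (Finset.mem_univ σ)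
  have hcard : (0:ℝ) < Fintype.card S := by exact_mod_cast Fintype.card_pos
  have hl : 0 ≤ log (Fintype.card S : ℝ) := Real.log_natCast_nonneg _
  rw [abs_le]
  constructor
  · obtain ⟨σ⟩ := ‹Nonempty S›
    have : exp (e σ) ≤ ∑ σ, exp (e σ) :=
      Finset.single_le_sum (f := fun σ => exp (e σ)) (fun _ _ => (exp_pos _).le) (Finset.mem_univ σ)
    have := Real.log_le_log (exp_pos _) this
    rw [Real.log_exp] at this
    have := hle σ
    have := neg_abs_le (e σ)
    linarith
  · have : ∑ σ, exp (e σ) ≤ Fintype.card S * exp (∑ σ, |e σ|) := by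
      rw [← nsmul_eq_mul, ← Finset.card_univ]
      refine Finset.sum_le_card_nsmul _ _ _ fun σ _ => ?_
      exact exp_le_exp.2 ((le_abs_self _).trans (hle σ))
    have := Real.log_le_log (Zpos e) this
    rw [Real.log_mul hcard.ne' (exp_pos _).ne', Real.log_exp] at this
    linarith

lemma L_deriv (e : ℝ → S → ℝ) (e' : S → ℝ) (x : ℝ) (h : ∀ σ, HasDerivAt (fun x => e x σ) (e' σ) x) :
    HasDerivAt (fun x => log (∑ σ, exp (e x σ))) (G (e x) e') x := by
  have h1 : HasDerivAt (fun x => ∑ σ, exp (e x σ)) (∑ σ, exp (e x σ) * e' σ) x :=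
    HasDerivAt.fun_sum fun σ _ => (h σ).exp
  refine (h1.log (Zpos _).ne').congr_deriv ?_
  unfold G
  congr 1
  exact Finset.sum_congr rfl fun σ _ => mul_comm _ _

lemma G_deriv (f : S → ℝ) (e : ℝ → S → ℝ) (e' : S → ℝ) (x : ℝ)
    (h : ∀ σ, HasDerivAt (fun x => e x σ) (e' σ) x) :
    HasDerivAt (fun x => G (e x) f) (G2 (e x) (fun σ τ => f σ * e' σ - f σ * e' τ)) x := by
  have h1 : HasDerivAt (fun x => ∑ σ, exp (e x σ)) (∑ σ, exp (e x σ) * e' σ) x :=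
    HasDerivAt.fun_sum fun σ _ => (h σ).exp
  have h2 : HasDerivAt (fun x => ∑ σ, f σ * exp (e x σ)) (∑ σ, f σ * (exp (e x σ) * e' σ)) x :=
    HasDerivAt.fun_sum fun σ _ => ((h σ).exp).const_mul _
  refine (h2.div h1 (Zpos _).ne').congr_deriv ?_
  rw [G2_sub, ← G_eq (e x) (fun σ => f σ * e' σ), ← G_mul (e x) f e']
  unfold G
  have hz := (Zpos (e x)).ne'
  have q1 : ∑ σ, f σ * (exp (e x σ) * e' σ) = ∑ σ, f σ * e' σ * exp (e x σ) :=
    Finset.sum_congr rfl fun σ _ => by ring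
  have q2 : ∑ σ, exp (e x σ) * e' σ = ∑ σ, e' σ * exp (e x σ) :=
    Finset.sum_congr rfl fun σ _ => by ring
  rw [q1, q2]
  field_simp

variable {K : Type} [Fintype K] [DecidableEq K]

def En (a : S → K → ℝ) (h : S → ℝ) (c : K → ℝ) (g : K → ℝ) (σ : S) : ℝ :=
  ∑ k, c k * a σ k * g k + h σ

lemma En_cont (a : S → K → ℝ) (h : S → ℝ) :
    Continuous (fun p : (K → ℝ) × (K → ℝ) => En a h p.1 p.2) := by
  unfold En; fun_prop

lemma En_cont_g (a : S → K → ℝ) (h : S → ℝ) (c : K → ℝ) : Continuous (fun g => En a h c g) := by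
  unfold En; fun_prop

def bnd (a : S → K → ℝ) (h : S → ℝ) (g : K → ℝ) : ℝ :=
  ∑ σ, (∑ k, |a σ k| * |g k| + |h σ|) + log (Fintype.card S)

lemma bnd_int (a : S → K → ℝ) (h : S → ℝ) : Integrable (bnd a h) (γ K) := by
  unfold bnd
  refine Integrable.add (integrable_finsetSum _ fun σ _ => Integrable.add
    (integrable_finsetSum _ fun k _ => ?_) (integrable_const _)) (integrable_const _)
  exact (integrable_coord k).abs.const_mul _

lemma L_le_bnd (a : S → K → ℝ) (h : S → ℝ) (c : K → ℝ) (hc : ∀ k, |c k| ≤ 1) (g : K → ℝ) :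
    |log (∑ σ, exp (En a h c g σ))| ≤ bnd a h g := by
  refine (L_bound _).trans ?_
  unfold bnd En
  gcongr with σ _
  refine (abs_add_le _ _).trans ?_
  gcongr
  refine (Finset.abs_sum_le_sum_abs _ _).trans ?_
  gcongr with k _
  rw [abs_mul, abs_mul]
  have := hc k
  have h1 : |c k| * |a σ k| ≤ 1 * |a σ k| := by gcongr
  rw [one_mul] at h1
  gcongr

lemma L_int (a : S → K → ℝ) (h : S → ℝ) (c : K → ℝ) (hc : ∀ k, |c k| ≤ 1) :
    Integrable (fun g => log (∑ σ, exp (En a h c g σ))) (γ K) :=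
  (bnd_int a h).mono' ((L_cont.comp (En_cont_g a h c)).aestronglyMeasurable)
    (ae_of_all _ fun g => L_le_bnd a h c hc g)

lemma G2_int (a : S → K → ℝ) (h : S → ℝ) (c : K → ℝ) (f : S → S → ℝ) :
    Integrable (fun g => G2 (En a h c g) f) (γ K) := by
  obtain ⟨C, hC⟩ := G2_bdd f
  exact Integrable.of_bound ((G2_cont f).comp (En_cont_g a h c)).aestronglyMeasurable C
    (ae_of_all _ fun g => hC _)

lemma IG2_cont (a : S → K → ℝ) (h : S → ℝ) (c : ℝ → K → ℝ) (hc : Continuous c) (f : S → S → ℝ) :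
    Continuous (fun t => ∫ g, G2 (En a h (c t) g) f ∂(γ K)) := by
  obtain ⟨C, hC⟩ := G2_bdd f
  refine continuous_of_dominated (bound := fun _ => C)
    (fun t => ((G2_cont f).comp (En_cont_g a h _)).aestronglyMeasurable)
    (fun t => ae_of_all _ fun g => hC _) (integrable_const _) (ae_of_all _ fun g => ?_)
  exact (G2_cont f).comp ((En_cont a h).comp (hc.prodMk continuous_const))

lemma ibp (a : S → K → ℝ) (h : S → ℝ) (c : K → ℝ) (k : K) :
    ∫ g, g k * G (En a h c g) (fun σ => a σ k) ∂(γ K) =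
      ∫ g, c k * G2 (En a h c g) (fun σ τ => a σ k ^ 2 - a σ k * a τ k) ∂(γ K) := by
  obtain ⟨C1, h1⟩ := G2_bdd (fun σ (_ : S) => a σ k)
  obtain ⟨C2, h2⟩ := G2_bdd (fun σ τ => c k * (a σ k ^ 2 - a σ k * a τ k))
  simp only [← G2_mul]
  refine stein_pi k _ _ (fun g x => ?_) ((G_cont _).comp (En_cont_g a h c)) (max C1 C2)
    (fun g => ?_) ((G2_cont _).comp (En_cont_g a h c)) (fun g => (h2 _).trans (le_max_right _ _))
  · have := G_deriv (fun σ => a σ k) (fun x => En a h c (Function.update g k x))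
      (fun σ => c k * a σ k) x ?_
    · refine this.congr_deriv ?_
      congr 1; ext σ τ; ring
    · intro σ
      unfold En
      refine HasDerivAt.add_const _ ?_
      have hs : HasDerivAt (fun x => ∑ j, c j * a σ j * Function.update g k x j)
        (∑ j, if j = k then c j * a σ j else 0) x := by
        refine HasDerivAt.fun_sum fun j _ => ?_
        by_cases hj : j = k
        · subst hj
          simpa using (hasDerivAt_id' x).const_mul (c j * a σ j)
        · simp only [Function.update_of_ne hj, if_neg hj]
          exact hasDerivAt_const _ _
      simpa using hs
  · rw [G_eq]; exact (h1 _).trans (le_max_left _ _)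

theorem interp (a : S → K → ℝ) (h : S → ℝ) (c c' : ℝ → K → ℝ) (d : K → ℝ)
    (hc : Continuous c) (hb : ∀ t ∈ Icc (0:ℝ) 1, ∀ k, |c t k| ≤ 1)
    (hd : ∀ t ∈ Ioo (0:ℝ) 1, ∀ k, HasDerivAt (fun t => c t k) (c' t k) t)
    (hc' : ∀ t ∈ Ioo (0:ℝ) 1, ContinuousAt c' t)
    (hcc : ∀ t ∈ Ioo (0:ℝ) 1, ∀ k, c' t k * c t k = d k) :
    ∫ t in (0:ℝ)..1, ∫ g, G2 (En a h (c t) g)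
        (fun σ τ => ∑ k, d k * (a σ k ^ 2 - a σ k * a τ k)) ∂(γ K) =
    ∫ g, log (∑ σ, exp (En a h (c 1) g σ)) ∂(γ K)
      - ∫ g, log (∑ σ, exp (En a h (c 0) g σ)) ∂(γ K) := by
  refine intervalIntegral.integral_eq_sub_of_hasDerivAt_of_le
    (f := fun t => ∫ g, log (∑ σ, exp (En a h (c t) g σ)) ∂(γ K)) zero_le_one ?_ ?_
    ((IG2_cont a h c hc _).intervalIntegrable 0 1)
  · refine continuousOn_of_dominated (bound := bnd a h)
      (fun t _ => (L_cont.comp (En_cont_g a h (c t))).aestronglyMeasurable)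
      (fun t ht => ae_of_all _ fun g => L_le_bnd a h (c t) (hb t ht) g) (bnd_int a h)
      (ae_of_all _ fun g => Continuous.continuousOn ?_)
    exact L_cont.comp ((En_cont a h).comp (hc.prodMk continuous_const))
  · intro t ht
    have hnb : ∀ᶠ s in nhds t, s ∈ Ioo (0:ℝ) 1 ∧ ∀ k, |c' s k| ≤ |c' t k| + 1 := by
      refine Filter.Eventually.and (Ioo_mem_nhds ht.1 ht.2) ?_
      rw [Filter.eventually_all]
      intro k
      have : ContinuousAt (fun s => |c' s k|) t :=
        ((continuous_abs.comp (continuous_apply k)).continuousAt).comp (hc' t ht)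
      filter_upwards [this.eventually (gt_mem_nhds (lt_add_one (|c' t k|)))] with s hs
      exact hs.le
    have hD := hasDerivAt_integral_of_dominated_loc_of_deriv_le (μ := γ K) (x₀ := t)
      (F := fun t g => log (∑ σ, exp (En a h (c t) g σ)))
      (F' := fun t g => G (En a h (c t) g) (fun σ => ∑ k, c' t k * a σ k * g k))
      (bound := fun g => ∑ σ, ∑ k, (|c' t k| + 1) * |a σ k| * |g k|)
      hnb (Filter.Eventually.of_forall fun s =>
        (L_cont.comp (En_cont_g a h (c s))).aestronglyMeasurable)
      (L_int a h _ (hb t (Ioo_subset_Icc_self ht))) ?_ (ae_of_all _ fun g s hs => ?_) ?_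
      (ae_of_all _ fun g s hs => ?_)
    · refine hD.2.congr_deriv ?_
      have e1 : ∀ g, G (En a h (c t) g) (fun σ => ∑ k, c' t k * a σ k * g k) =
          ∑ k, c' t k * (g k * G (En a h (c t) g) (fun σ => a σ k)) := by
        intro g
        simp only [G_eq, ← G2_mul, G2_sum]
        refine Finset.sum_congr rfl fun k _ => ?_
        congr 1; ext σ τ; ring
      have hint : ∀ k, Integrable (fun g : K → ℝ => g k * G (En a h (c t) g) (fun σ => a σ k)) (γ K) := by
        intro k
        obtain ⟨C1, h1⟩ := G2_bdd (fun σ (_ : S) => a σ k)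
        refine (integrable_coord k).mul_bdd (c := C1)
          ((G_cont _).comp (En_cont_g a h (c t))).aestronglyMeasurable (ae_of_all _ fun g => ?_)
        rw [G_eq]; exact h1 _
      simp only [e1]
      rw [integral_finsetSum _ fun k _ => (hint k).const_mul _]
      simp only [integral_const_mul, ibp, G2_sum, G2_mul]
      rw [integral_finsetSum _ fun k _ => (G2_int a h _ _).const_mul _]
      refine Finset.sum_congr rfl fun k _ => ?_
      rw [integral_const_mul, ← mul_assoc, hcc t ht k]
    · refine Continuous.aestronglyMeasurable ?_
      unfold G
      have := En_cont_g a h (c t)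
      refine Continuous.div (by fun_prop) (by fun_prop) fun e => (Zpos _).ne'
    · rw [G_eq]
      refine G2_bound _ _ _ fun σ τ => ?_
      refine le_trans ?_ (Finset.single_le_sum (f := fun σ => ∑ k, (|c' t k| + 1) * |a σ k| * |g k|)
        (fun _ _ => Finset.sum_nonneg fun _ _ => by positivity) (Finset.mem_univ σ))
      refine (Finset.abs_sum_le_sum_abs _ _).trans (Finset.sum_le_sum fun k _ => ?_)
      rw [abs_mul, abs_mul]
      have := hs.2 k
      gcongr
    · exact integrable_finsetSum _ fun σ _ => integrable_finsetSum _ fun k _ =>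
        (integrable_coord k).abs.const_mul _
    · refine L_deriv (fun s => En a h (c s) g) _ s fun σ => ?_
      unfold En
      refine HasDerivAt.add_const _ (HasDerivAt.fun_sum fun k _ => ?_)
      exact ((hd s hs.1 k).mul_const _).mul_const _

end abs

abbrev KK (ν N : ℕ) := (Fin ν × Fin N × Fin N) ⊕ (Fin ν × Fin N)

def Φ (ν N : ℕ) (p : Weights ν N × Fields ν N) : KK ν N → ℝ :=
  Sum.elim (fun k => p.1 k.1 k.2.1 k.2.2) (fun k => p.2 k.1 k.2)

instance (ν N : ℕ) : IsProbabilityMeasure (μW ν N) := by unfold μW; infer_instance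
instance (ν N : ℕ) : IsProbabilityMeasure (μF ν N) := by unfold μF; infer_instance

lemma Φ_mp (ν N : ℕ) : MeasurePreserving (Φ ν N) ((μW ν N).prod (μF ν N)) (γ (KK ν N)) := by
  have hm : Measurable (Φ ν N) := by
    refine measurable_pi_lambda _ fun k => ?_
    rcases k with k | k <;> simp only [Φ, Sum.elim_inl, Sum.elim_inr] <;> fun_prop
  refine ⟨hm, ?_⟩
  symm
  refine Measure.pi_eq fun s hs => ?_
  rw [Measure.map_apply hm (MeasurableSet.univ_pi hs)]
  have : Φ ν N ⁻¹' (univ.pi s) =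
      (univ.pi fun x => univ.pi fun i => univ.pi fun j => s (Sum.inl (x, i, j))) ×ˢ
      (univ.pi fun x => univ.pi fun i => s (Sum.inr (x, i))) := by
    ext ⟨ξ, η⟩
    simp [Φ, mem_pi]
  rw [this, Measure.prod_prod]
  unfold μW μF
  simp only [Measure.pi_pi]
  rw [Fintype.prod_sum_type]
  simp only [Fintype.prod_prod_type]

lemma int_Φ (ν N : ℕ) (F : (KK ν N → ℝ) → ℝ) (hF : Integrable F (γ (KK ν N))) :
    ∫ ξ, ∫ η, F (Φ ν N (ξ, η)) ∂(μF ν N) ∂(μW ν N) = ∫ g, F g ∂(γ (KK ν N)) := by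
  have mp := Φ_mp ν N
  rw [← mp.map_eq, integral_map mp.measurable.aemeasurable (by rw [mp.map_eq]; exact hF.1)]
  exact (integral_prod (fun p => F (Φ ν N p)) (mp.integrable_comp_of_integrable hF)).symm

def aa (ν N : ℕ) (Nv : Fin ν → ℕ) (α q : Fin ν → ℝ) (β : ℝ) (σ : Config ν N) : KK ν N → ℝ :=
  Sum.elim
    (fun k => β * ∑ y : Fin ν, (if (y : ℕ) = (k.1 : ℕ) + 1 then
        (if (k.2.1 : ℕ) < Nv k.1 ∧ (k.2.2 : ℕ) < Nv y then
          sg (σ k.1 k.2.1) * sg (σ y k.2.2) / √N else 0) else 0))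
    (fun k => -β * (√(Qv ν α q k.1) * (if (k.2 : ℕ) < Nv k.1 then sg (σ k.1 k.2) else 0)))

def cc (ν N : ℕ) (t : ℝ) : KK ν N → ℝ := Sum.elim (fun _ => √t) (fun _ => √(1 - t))
def cc' (ν N : ℕ) (t : ℝ) : KK ν N → ℝ :=
  Sum.elim (fun _ => 1 / (2 * √t)) (fun _ => -1 / (2 * √(1 - t)))
def dd (ν N : ℕ) : KK ν N → ℝ := Sum.elim (fun _ => 1 / 2) (fun _ => -(1 / 2))

lemma sum3 (ν N : ℕ) (F : Fin ν → Fin N → Fin N → ℝ) :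
    ∑ y, ∑ i, ∑ j, F y i j = ∑ i, ∑ j, ∑ y, F y i j := by
  rw [Finset.sum_comm]
  refine Finset.sum_congr rfl fun i _ => ?_
  rw [Finset.sum_comm]

lemma En_eq (ν N : ℕ) (Nv : Fin ν → ℕ) (α q : Fin ν → ℝ) (β t : ℝ)
    (b : Fin ν → ℝ) (ξ : Weights ν N) (η : Fields ν N) (σ : Config ν N) :
    En (aa ν N Nv α q β) (bias ν N Nv b) (cc ν N t) (Φ ν N (ξ, η)) σ =
      -β * hamT ν N Nv α q t ξ η σ + bias ν N Nv b σ := by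
  unfold En hamT
  congr 1
  rw [Fintype.sum_sum_type, mul_add]
  simp only [Fintype.sum_prod_type, cc, aa, Φ, Sum.elim_inl, Sum.elim_inr]
  congr 1
  · unfold ham
    rw [show ∀ s : ℝ, -β * (√t * -s) = β * √t * s from fun s => by ring, Finset.mul_sum]
    refine Finset.sum_congr rfl fun x _ => ?_
    have : ∀ (y : Fin ν), (if (y : ℕ) = (x : ℕ) + 1 then
        ∑ i : Fin N, ∑ j : Fin N,
          (if (i : ℕ) < Nv x ∧ (j : ℕ) < Nv y then
            ξ x i j / √N * sg (σ x i) * sg (σ y j)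
          else 0)
      else 0) = ∑ i : Fin N, ∑ j : Fin N, (if (y : ℕ) = (x : ℕ) + 1 then
          (if (i : ℕ) < Nv x ∧ (j : ℕ) < Nv y then
            ξ x i j / √N * sg (σ x i) * sg (σ y j)
          else 0)
      else 0) := by
      intro y; split_ifs <;> simp
    simp only [this]
    rw [sum3, Finset.mul_sum]
    refine Finset.sum_congr rfl fun i _ => ?_
    rw [Finset.mul_sum]
    refine Finset.sum_congr rfl fun j _ => ?_
    rw [Finset.mul_sum, Finset.mul_sum, Finset.mul_sum, Finset.sum_mul]
    refine Finset.sum_congr rfl fun y _ => ?_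
    split_ifs <;> ring
  · unfold ham'
    rw [Finset.mul_sum, Finset.mul_sum]
    refine Finset.sum_congr rfl fun x _ => ?_
    rw [Finset.mul_sum, Finset.mul_sum, Finset.mul_sum]
    refine Finset.sum_congr rfl fun i _ => ?_
    split_ifs <;> ring

lemma sum_if_mul (ν : ℕ) (x : Fin ν) (A B : Fin ν → ℝ) :
    (∑ y : Fin ν, if (y : ℕ) = (x : ℕ) + 1 then A y else 0) *
      (∑ y : Fin ν, if (y : ℕ) = (x : ℕ) + 1 then B y else 0) =
      ∑ y : Fin ν, if (y : ℕ) = (x : ℕ) + 1 then A y * B y else 0 := by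
  rw [Finset.sum_mul]
  refine Finset.sum_congr rfl fun y _ => ?_
  split_ifs with h
  · congr 1
    rw [Finset.sum_eq_single y]
    · simp [h]
    · intro z _ hz
      rw [if_neg]
      intro h'
      exact hz (Fin.ext (h'.trans h.symm))
    · simp
  · simp

def ov (ν N : ℕ) (Nv : Fin ν → ℕ) (x : Fin ν) (σ τ : Config ν N) : ℝ :=
  ∑ i : Fin N, (if (i : ℕ) < Nv x then sg (σ x i) * sg (τ x i) else 0)

lemma adjSum_congr (ν : ℕ) (F F' : Fin ν → Fin ν → ℝ) (h : ∀ x y, F x y = F' x y) :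
    adjSum ν F = adjSum ν F' := by
  rw [show F = F' from funext fun x => funext fun y => h x y]

lemma adjSum_mul (ν : ℕ) (c : ℝ) (F : Fin ν → Fin ν → ℝ) :
    c * adjSum ν F = adjSum ν (fun x y => c * F x y) := by
  unfold adjSum
  simp only [Finset.mul_sum, mul_ite, mul_zero]

lemma adjSum_add (ν : ℕ) (F F' : Fin ν → Fin ν → ℝ) :
    adjSum ν F + adjSum ν F' = adjSum ν (fun x y => F x y + F' x y) := by
  unfold adjSum
  simp only [← Finset.sum_add_distrib]
  refine Finset.sum_congr rfl fun x _ => Finset.sum_congr rfl fun y _ => ?_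
  split_ifs <;> simp

lemma adjSum_sub (ν : ℕ) (F F' : Fin ν → Fin ν → ℝ) :
    adjSum ν F - adjSum ν F' = adjSum ν (fun x y => F x y - F' x y) := by
  unfold adjSum
  simp only [← Finset.sum_sub_distrib]
  refine Finset.sum_congr rfl fun x _ => Finset.sum_congr rfl fun y _ => ?_
  split_ifs <;> simp

lemma Qv_adj (ν : ℕ) (α q r : Fin ν → ℝ) :
    ∑ x, Qv ν α q x * r x = adjSum ν (fun x y => α y * q y * r x + α x * q x * r y) := by
  rw [← adjSum_add ν (fun x y => α y * q y * r x) (fun x y => α x * q x * r y)]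
  have e : ∀ x, Qv ν α q x * r x =
      (∑ y : Fin ν, if (y : ℕ) = (x : ℕ) + 1 then α y * q y * r x else 0) +
      (∑ y : Fin ν, if (x : ℕ) = (y : ℕ) + 1 then α y * q y * r x else 0) := by
    intro x
    unfold Qv
    rw [Finset.sum_mul, ← Finset.sum_add_distrib]
    refine Finset.sum_congr rfl fun y _ => ?_
    by_cases h1 : (y : ℕ) = (x : ℕ) + 1
    · have h2 : ¬ (x : ℕ) = (y : ℕ) + 1 := by omega
      rw [if_pos (Or.inl h1), if_pos h1, if_neg h2, add_zero]
    · by_cases h2 : (x : ℕ) = (y : ℕ) + 1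
      · rw [if_pos (Or.inr h2.symm), if_neg h1, if_pos h2, zero_add]
      · have h3 : ¬ (y : ℕ) + 1 = (x : ℕ) := by omega
        simp [h1, h2, h3]
  simp only [e, Finset.sum_add_distrib]
  congr 1
  unfold adjSum
  rw [Finset.sum_comm]

lemma cov (ν N : ℕ) (Nv : Fin ν → ℕ) (α q : Fin ν → ℝ) (β : ℝ) (hQ : ∀ x, 0 ≤ Qv ν α q x)
    (σ τ : Config ν N) :
    ∑ k, dd ν N k * (aa ν N Nv α q β σ k * aa ν N Nv α q β τ k) =
      β ^ 2 / 2 * adjSum ν (fun x y => ov ν N Nv x σ τ * ov ν N Nv y σ τ / N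
        - (α y * q y * ov ν N Nv x σ τ + α x * q x * ov ν N Nv y σ τ)) := by
  rw [← adjSum_sub ν (fun x y => ov ν N Nv x σ τ * ov ν N Nv y σ τ / N), mul_sub,
    Fintype.sum_sum_type]
  simp only [Fintype.sum_prod_type, dd, aa, Sum.elim_inl, Sum.elim_inr]
  rw [sub_eq_add_neg]
  congr 1
  · unfold adjSum
    rw [Finset.mul_sum]
    refine Finset.sum_congr rfl fun x _ => ?_
    have e : ∀ A B : ℝ, 1 / 2 * (β * A * (β * B)) = β ^ 2 / 2 * (A * B) := fun A B => by ring
    simp only [e, sum_if_mul, ← Finset.mul_sum]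
    congr 1
    rw [← sum3]
    refine Finset.sum_congr rfl fun y _ => ?_
    split_ifs with h
    · unfold ov
      rw [Finset.sum_mul_sum, Finset.sum_div]
      refine Finset.sum_congr rfl fun i _ => ?_
      rw [Finset.sum_div]
      refine Finset.sum_congr rfl fun j _ => ?_
      have hs : √(N:ℝ) * √N = N := Real.mul_self_sqrt (Nat.cast_nonneg N)
      by_cases h1 : (i : ℕ) < Nv x <;> by_cases h2 : (j : ℕ) < Nv y <;> simp [h1, h2]
      rw [div_mul_div_comm, hs]
      ring
    · simp
  · rw [← Qv_adj ν α q (fun x => ov ν N Nv x σ τ), Finset.mul_sum, ← Finset.sum_neg_distrib]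
    refine Finset.sum_congr rfl fun x _ => ?_
    unfold ov
    rw [Finset.mul_sum, Finset.mul_sum, ← Finset.sum_neg_distrib]
    refine Finset.sum_congr rfl fun i _ => ?_
    have hs := Real.mul_self_sqrt (hQ x)
    split_ifs
    · rw [← hs]; 
      rw [Real.sqrt_mul_self (Real.sqrt_nonneg _)]
      ring
    · simp

lemma sg_sq (s : Bool) : sg s * sg s = 1 := by cases s <;> simp [sg]

lemma ov_self (ν N : ℕ) (Nv : Fin ν → ℕ) (x : Fin ν) (hx : Nv x ≤ N) (σ : Config ν N) :
    ov ν N Nv x σ σ = Nv x := by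
  unfold ov
  simp only [sg_sq]
  rw [Fin.sum_univ_eq_sum_range (fun i => if i < Nv x then (1:ℝ) else 0) N, Finset.sum_boole]
  congr 1
  rw [show (Finset.range N).filter (fun i => i < Nv x) = Finset.range (Nv x) by
    ext i; simp; omega, Finset.card_range]

lemma sum_t0 (ν N : ℕ) (Nv : Fin ν → ℕ) (u : Fin ν → Fin N → ℝ) :
    ∑ σ : Config ν N, exp (∑ x, ∑ i : Fin N, if (i : ℕ) < Nv x then u x i * sg (σ x i) else 0) =
      ∏ x, ∏ i : Fin N, if (i : ℕ) < Nv x then 2 * cosh (u x i) else 2 := by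
  have h1 : ∀ x (i : Fin N), (if (i : ℕ) < Nv x then 2 * cosh (u x i) else 2) =
      ∑ s : Bool, exp (if (i : ℕ) < Nv x then u x i * sg s else 0) := by
    intro x i
    split_ifs
    · simp [sg, Real.cosh_eq]; ring
    · simp
  simp only [h1, Real.exp_sum]
  simp only [Fintype.prod_sum]

lemma logcosh_bound (z : ℝ) : |log (cosh z)| ≤ |z| := by
  rw [abs_of_nonneg (Real.log_nonneg (Real.one_le_cosh z))]
  have : cosh z ≤ exp |z| := by
    rw [Real.cosh_eq]
    have h1 := exp_le_exp.2 (le_abs_self z)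
    have h2 := exp_le_exp.2 (neg_le_abs z)
    linarith
  have := Real.log_le_log (Real.cosh_pos z) this
  rwa [Real.log_exp] at this

lemma logcosh_cont : Continuous (fun z => log (cosh z)) :=
  Real.continuous_cosh.log fun z => (Real.cosh_pos z).ne'

lemma logcosh_int (b c : ℝ) : Integrable (fun y => log (cosh (b + c * y))) (gaussianReal 0 1) := by
  refine Integrable.mono' (g := fun y => |b + c * y|)
    ((integrable_const b).add (integrable_id_gauss.const_mul c)).abs
    (logcosh_cont.comp (by fun_prop)).aestronglyMeasurable (ae_of_all _ fun y => logcosh_bound _)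

lemma t0 (ν N : ℕ) (Nv : Fin ν → ℕ) (hle : ∀ x, Nv x ≤ N) (α q : Fin ν → ℝ) (β : ℝ)
    (b : Fin ν → ℝ) :
    ∫ g, log (∑ σ, exp (En (aa ν N Nv α q β) (bias ν N Nv b) (cc ν N 0) g σ)) ∂(γ (KK ν N)) =
      (ν * N : ℕ) * log 2 + ∑ x, (Nv x : ℝ) *
        ∫ η, log (cosh (b x + β * η * √(Qv ν α q x))) ∂(gaussianReal 0 1) := by
  have e1 : ∀ (g : KK ν N → ℝ) (σ : Config ν N),
      En (aa ν N Nv α q β) (bias ν N Nv b) (cc ν N 0) g σ =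
      ∑ x, ∑ i : Fin N, if (i : ℕ) < Nv x then
        (b x + (-β * √(Qv ν α q x)) * g (Sum.inr (x, i))) * sg (σ x i) else 0 := by
    intro g σ
    have hg : g = Φ ν N (fun x i j => g (Sum.inl (x, i, j)), fun x i => g (Sum.inr (x, i))) := by
      ext k; rcases k with ⟨x, i, j⟩ | ⟨x, i⟩ <;> rfl
    conv_lhs => rw [hg]
    rw [En_eq]
    unfold hamT ham' bias
    simp only [Real.sqrt_zero, zero_mul, zero_add, sub_zero, Real.sqrt_one, one_mul]
    rw [Finset.mul_sum, ← Finset.sum_add_distrib]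
    refine Finset.sum_congr rfl fun x _ => ?_
    rw [Finset.mul_sum, Finset.mul_sum, Finset.mul_sum, ← Finset.sum_add_distrib]
    refine Finset.sum_congr rfl fun i _ => ?_
    split_ifs <;> ring
  have e2 : ∀ g : KK ν N → ℝ,
      log (∑ σ, exp (En (aa ν N Nv α q β) (bias ν N Nv b) (cc ν N 0) g σ)) =
      ∑ x, ∑ i : Fin N, (log 2 + if (i : ℕ) < Nv x then
        log (cosh (b x + (-β * √(Qv ν α q x)) * g (Sum.inr (x, i)))) else 0) := by
    intro g
    simp only [e1]
    rw [sum_t0 ν N Nv (fun x i => b x + (-β * √(Qv ν α q x)) * g (Sum.inr (x, i)))]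
    have hpos : ∀ x (i : Fin N), (if (i : ℕ) < Nv x then
        2 * cosh (b x + (-β * √(Qv ν α q x)) * g (Sum.inr (x, i))) else 2) ≠ 0 := by
      intro x i
      have := Real.cosh_pos (b x + (-β * √(Qv ν α q x)) * g (Sum.inr (x, i)))
      split_ifs <;> positivity
    rw [Real.log_prod fun x _ => Finset.prod_ne_zero_iff.2 fun i _ => hpos x i]
    refine Finset.sum_congr rfl fun x _ => ?_
    rw [Real.log_prod fun i _ => hpos x i]
    refine Finset.sum_congr rfl fun i _ => ?_
    split_ifs
    · rw [Real.log_mul two_ne_zero (Real.cosh_pos _).ne']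
    · simp
  have mpe := fun k : KK ν N => measurePreserving_eval (fun _ : KK ν N => gaussianReal 0 1) k
  have i1 : ∀ x (i : Fin N), Integrable (fun g : KK ν N → ℝ => if (i : ℕ) < Nv x then
        log (cosh (b x + (-β * √(Qv ν α q x)) * g (Sum.inr (x, i)))) else 0) (γ (KK ν N)) := by
    intro x i
    split_ifs
    · exact (mpe (Sum.inr (x, i))).integrable_comp_of_integrable
        (logcosh_int (b x) (-β * √(Qv ν α q x)))
    · exact integrable_zero _ _ _
  have e3 : ∀ x, ∫ y, log (cosh (b x + (-β * √(Qv ν α q x)) * y)) ∂(gaussianReal 0 1) =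
      ∫ η, log (cosh (b x + β * η * √(Qv ν α q x))) ∂(gaussianReal 0 1) := by
    intro x
    have hn : (gaussianReal 0 1).map (fun y : ℝ => -y) = gaussianReal 0 1 := by
      rw [gaussianReal_map_neg, neg_zero]
    conv_rhs => rw [← hn]
    have hcont : Continuous (fun η : ℝ => log (cosh (b x + β * η * √(Qv ν α q x)))) :=
      logcosh_cont.comp (f := fun η : ℝ => b x + β * η * √(Qv ν α q x)) (by fun_prop)
    rw [integral_map (φ := fun y : ℝ => -y) (by fun_prop) hcont.aestronglyMeasurable]
    congr 1; ext y; congr 2; ring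
  have e4 : ∀ x (i : Fin N), ∫ g : KK ν N → ℝ, (if (i : ℕ) < Nv x then
        log (cosh (b x + (-β * √(Qv ν α q x)) * g (Sum.inr (x, i)))) else 0) ∂(γ (KK ν N)) =
      if (i : ℕ) < Nv x then
        ∫ η, log (cosh (b x + β * η * √(Qv ν α q x))) ∂(gaussianReal 0 1) else 0 := by
    intro x i
    split_ifs
    · rw [← e3 x]
      conv_rhs => rw [← (mpe (Sum.inr (x, i))).map_eq]
      have hcont : Continuous (fun y : ℝ => log (cosh (b x + (-β * √(Qv ν α q x)) * y))) :=
        logcosh_cont.comp (f := fun y : ℝ => b x + (-β * √(Qv ν α q x)) * y) (by fun_prop)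
      rw [integral_map (mpe _).measurable.aemeasurable hcont.aestronglyMeasurable]
    · simp
  simp only [e2]
  have i2 : ∀ x (i : Fin N), Integrable (fun g : KK ν N → ℝ => log 2 + if (i : ℕ) < Nv x then
        log (cosh (b x + (-β * √(Qv ν α q x)) * g (Sum.inr (x, i)))) else 0) (γ (KK ν N)) :=
    fun x i => (integrable_const _).add (i1 x i)
  rw [integral_finsetSum _ fun x _ => integrable_finsetSum _ fun i _ => i2 x i]
  have e5 : ∀ x, ∫ g : KK ν N → ℝ, ∑ i : Fin N, (log 2 + if (i : ℕ) < Nv x then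
        log (cosh (b x + (-β * √(Qv ν α q x)) * g (Sum.inr (x, i)))) else 0) ∂(γ (KK ν N)) =
      N * log 2 + Nv x * ∫ η, log (cosh (b x + β * η * √(Qv ν α q x))) ∂(gaussianReal 0 1) := by
    intro x
    rw [integral_finsetSum _ fun i _ => i2 x i]
    have : ∀ i : Fin N, ∫ g : KK ν N → ℝ, (log 2 + if (i : ℕ) < Nv x then
        log (cosh (b x + (-β * √(Qv ν α q x)) * g (Sum.inr (x, i)))) else 0) ∂(γ (KK ν N)) =
        log 2 + if (i : ℕ) < Nv x then
        ∫ η, log (cosh (b x + β * η * √(Qv ν α q x))) ∂(gaussianReal 0 1) else 0 := by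
      intro i
      rw [integral_add (integrable_const _) (i1 x i), e4]
      simp
    simp only [this, Finset.sum_add_distrib]
    have ho := ov_self ν N Nv x (hle x) (fun _ _ => true)
    unfold ov at ho
    simp only [sg_sq] at ho
    rw [← ho, Finset.sum_mul]
    simp
  rw [Finset.sum_congr rfl fun x _ => e5 x, Finset.sum_add_distrib]
  simp
  ring

lemma cc_cont (ν N : ℕ) : Continuous (cc ν N) := by
  refine continuous_pi fun k => ?_
  rcases k with k | k <;> simp only [cc, Sum.elim_inl, Sum.elim_inr] <;> fun_prop

lemma interp_app (ν N : ℕ) (Nv : Fin ν → ℕ) (α q : Fin ν → ℝ) (β : ℝ) (b : Fin ν → ℝ) :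
    ∫ t in (0:ℝ)..1, ∫ g, G2 (En (aa ν N Nv α q β) (bias ν N Nv b) (cc ν N t) g)
        (fun σ τ => ∑ k, dd ν N k * (aa ν N Nv α q β σ k ^ 2
          - aa ν N Nv α q β σ k * aa ν N Nv α q β τ k)) ∂(γ (KK ν N)) =
    ∫ g, log (∑ σ, exp (En (aa ν N Nv α q β) (bias ν N Nv b) (cc ν N 1) g σ)) ∂(γ (KK ν N))
      - ∫ g, log (∑ σ, exp (En (aa ν N Nv α q β) (bias ν N Nv b) (cc ν N 0) g σ)) ∂(γ (KK ν N)) := by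
  refine interp _ _ (cc ν N) (cc' ν N) (dd ν N) (cc_cont ν N) ?_ ?_ ?_ ?_
  · rintro t ⟨h0, h1⟩ k
    rcases k with k | k <;> simp only [cc, Sum.elim_inl, Sum.elim_inr] <;>
      rw [abs_of_nonneg (Real.sqrt_nonneg _)] <;> refine Real.sqrt_le_iff.2 ⟨zero_le_one, ?_⟩ <;> linarith
  · rintro t ⟨h0, h1⟩ k
    rcases k with k | k <;> simp only [cc, cc', Sum.elim_inl, Sum.elim_inr]
    · exact Real.hasDerivAt_sqrt h0.ne'
    · exact ((hasDerivAt_id' t).const_sub 1).sqrt (by linarith)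
  · rintro t ⟨h0, h1⟩
    refine continuousAt_pi.2 fun k => ?_
    have p0 : 2 * √t ≠ 0 := by positivity
    have p1 : 2 * √(1 - t) ≠ 0 := by
      have : 0 < 1 - t := by linarith
      positivity
    rcases k with k | k <;> simp only [cc', Sum.elim_inl, Sum.elim_inr]
    · exact ContinuousAt.div (by fun_prop) (by fun_prop) p0
    · exact ContinuousAt.div (by fun_prop) (by fun_prop) p1
  · rintro t ⟨h0, h1⟩ k
    have p0 : √t ≠ 0 := by positivity
    have p1 : √(1 - t) ≠ 0 := by
      have : 0 < 1 - t := by linarith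
      positivity
    rcases k with k | k <;> simp only [cc, cc', dd, Sum.elim_inl, Sum.elim_inr] <;> field_simp

/-- interpolation sum rule, Lemma 1 of the paper: for every
`q ∈ [0,1]^ν`,
`E[A_N(β)] + (β²/2) Σ_{|x−y|=1} α_x α_y ∫₀¹ E⟨(R^x−q_x)(R^y−q_y)⟩_t dt
  = Σ_x α_x E_{0,1}[log cosh(b_x + βη√(Σ_{|y−x|=1}α_y q_y))]
    + (β²/2) Σ_{|x−y|=1} α_x α_y (1−q_x)(1−q_y)`. -/
theorem sum_rule
    (ν N : ℕ) (hν : 2 ≤ ν) (hN : 0 < N)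
    (Nv : Fin ν → ℕ) (hNv : ∀ x, 0 < Nv x) (hsum : ∑ x, Nv x = N)
    (β : ℝ) (hβ : 0 ≤ β) (b : Fin ν → ℝ)
    (q : Fin ν → ℝ) (hq : ∀ x, q x ∈ Icc (0:ℝ) 1)
    (α : Fin ν → ℝ) (hα : ∀ x, α x = (Nv x : ℝ) / N) :
    (∫ ξ, (1 / (N:ℝ)) * Real.log (Z ν N Nv α q β 1 b ξ 0) ∂(μW ν N)) +
      β ^ 2 / 2 * adjSum ν (fun x y => α x * α y *
        ∫ t in (0:ℝ)..1, ∫ ξ, ∫ η,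
          gibbs2 ν N Nv α q β t b ξ η
            (fun σ τ => (ovl ν N Nv x σ τ - q x) * (ovl ν N Nv y σ τ - q y))
          ∂(μF ν N) ∂(μW ν N)) =
    (∑ x : Fin ν, α x *
        ∫ η, Real.log (Real.cosh (b x + β * η * Real.sqrt (Qv ν α q x)))
          ∂(gaussianReal 0 1)) +
      β ^ 2 / 2 * adjSum ν (fun x y => α x * α y * (1 - q x) * (1 - q y)) := by
  have hNr : (N:ℝ) ≠ 0 := by exact_mod_cast hN.ne'
  have hle : ∀ x, Nv x ≤ N := fun x => hsum ▸
    Finset.single_le_sum (f := Nv) (fun _ _ => Nat.zero_le _) (Finset.mem_univ x)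
  have hNvr : ∀ x, (Nv x : ℝ) ≠ 0 := fun x => by exact_mod_cast (hNv x).ne'
  have hQ : ∀ x, 0 ≤ Qv ν α q x := by
    intro x
    refine Finset.sum_nonneg fun y _ => ?_
    have := (hq y).1
    have : 0 ≤ α y := by rw [hα]; positivity
    split_ifs <;> positivity
  set a := aa ν N Nv α q β with ha
  set h := bias ν N Nv b with hh
  let f : Fin ν → Fin ν → Config ν N → Config ν N → ℝ := fun x y σ τ =>
    (ovl ν N Nv x σ τ - q x) * (ovl ν N Nv y σ τ - q y)
  let I : Fin ν → Fin ν → ℝ := fun x y =>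
    ∫ t in (0:ℝ)..1, ∫ g, G2 (En a h (cc ν N t) g) (f x y) ∂(γ (KK ν N))
  let B : ℝ := adjSum ν (fun x y => α x * α y * (1 - q x) * (1 - q y))
  have hov : ∀ x σ τ, ov ν N Nv x σ τ = N * α x * ovl ν N Nv x σ τ := by
    intro x σ τ
    have h1 := hNvr x
    rw [hα]
    unfold ovl ov
    field_simp
  have hself : ∀ x σ, ovl ν N Nv x σ σ = 1 := by
    intro x σ
    have h1 := hNvr x
    have h2 := ov_self ν N Nv x (hle x) σ
    unfold ov at h2
    unfold ovl
    rw [h2, div_self h1]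
  -- covariance identity
  have hcov : ∀ σ τ, ∑ k, dd ν N k * (a σ k ^ 2 - a σ k * a τ k) =
      N * (β ^ 2 / 2) * B - N * (β ^ 2 / 2) * adjSum ν (fun x y => α x * α y * f x y σ τ) := by
    intro σ τ
    have c1 := cov ν N Nv α q β hQ σ σ
    have c2 := cov ν N Nv α q β hQ σ τ
    have : ∑ k, dd ν N k * (a σ k ^ 2 - a σ k * a τ k) =
        ∑ k, dd ν N k * (a σ k * a σ k) - ∑ k, dd ν N k * (a σ k * a τ k) := by
      rw [← Finset.sum_sub_distrib]
      exact Finset.sum_congr rfl fun k _ => by ring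
    rw [this, c1, c2, ← mul_sub, ← mul_sub, adjSum_sub, adjSum_sub, adjSum_mul, adjSum_mul]
    refine adjSum_congr _ _ _ fun x y => ?_
    simp only [hov, hself, f]
    field_simp
    ring
  -- integrated right side
  have hI : ∫ t in (0:ℝ)..1, ∫ g, G2 (En a h (cc ν N t) g)
        (fun σ τ => ∑ k, dd ν N k * (a σ k ^ 2 - a σ k * a τ k)) ∂(γ (KK ν N)) =
      N * (β ^ 2 / 2) * B - N * (β ^ 2 / 2) * adjSum ν (fun x y => α x * α y * I x y) := by
    have s1 : ∀ t, ∫ g, G2 (En a h (cc ν N t) g)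
        (fun σ τ => ∑ k, dd ν N k * (a σ k ^ 2 - a σ k * a τ k)) ∂(γ (KK ν N)) =
        N * (β ^ 2 / 2) * B - N * (β ^ 2 / 2) * ∑ x : Fin ν, ∑ y : Fin ν,
          (if (y : ℕ) = (x : ℕ) + 1 then α x * α y else 0) *
            ∫ g, G2 (En a h (cc ν N t) g) (f x y) ∂(γ (KK ν N)) := by
      intro t
      have s2 : ∀ g, G2 (En a h (cc ν N t) g)
        (fun σ τ => ∑ k, dd ν N k * (a σ k ^ 2 - a σ k * a τ k)) =
        N * (β ^ 2 / 2) * B - N * (β ^ 2 / 2) * ∑ x : Fin ν, ∑ y : Fin ν,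
          (if (y : ℕ) = (x : ℕ) + 1 then α x * α y else 0) * G2 (En a h (cc ν N t) g) (f x y) := by
        intro g
        simp only [hcov]
        rw [G2_sub _ (fun _ _ => N * (β ^ 2 / 2) * B), G2_const, G2_mul]
        unfold adjSum
        congr 2
        simp only [← G2_mul, ← G2_sum]
        congr 1; ext σ τ
        simp only [ite_mul, zero_mul]
      simp only [s2]
      have i0 : ∀ x y : Fin ν, Integrable (fun g => (if (y : ℕ) = (x : ℕ) + 1 then α x * α y else 0) *
          G2 (En a h (cc ν N t) g) (f x y)) (γ (KK ν N)) := fun x y => (G2_int a h _ _).const_mul _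
      rw [integral_sub (integrable_const _) ((integrable_finsetSum _ fun x _ =>
        integrable_finsetSum _ fun y _ => i0 x y).const_mul _)]
      simp only [integral_const_mul]
      rw [integral_finsetSum _ fun x _ => integrable_finsetSum _ fun y _ => i0 x y]
      congr 1
      · simp
      · congr 1
        refine Finset.sum_congr rfl fun x _ => ?_
        rw [integral_finsetSum _ fun y _ => i0 x y]
        simp only [integral_const_mul]
    simp only [s1]
    have cont : ∀ x y, Continuous fun t => ∫ g, G2 (En a h (cc ν N t) g) (f x y) ∂(γ (KK ν N)) :=
      fun x y => IG2_cont a h _ (cc_cont ν N) _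
    have i0 : ∀ x y : Fin ν, IntervalIntegrable (fun t => (if (y : ℕ) = (x : ℕ) + 1 then α x * α y else 0) *
        ∫ g, G2 (En a h (cc ν N t) g) (f x y) ∂(γ (KK ν N))) volume 0 1 :=
      fun x y => (((cont x y).intervalIntegrable 0 1).const_mul _)
    have i1 : ∀ x : Fin ν, IntervalIntegrable (fun t => ∑ y : Fin ν,
        (if (y : ℕ) = (x : ℕ) + 1 then α x * α y else 0) *
        ∫ g, G2 (En a h (cc ν N t) g) (f x y) ∂(γ (KK ν N))) volume 0 1 :=
      fun x => (continuous_finsetSum _ fun y _ => continuous_const.mul (cont x y)).intervalIntegrable 0 1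
    have i2 : IntervalIntegrable (fun t => ∑ x : Fin ν, ∑ y : Fin ν,
        (if (y : ℕ) = (x : ℕ) + 1 then α x * α y else 0) *
        ∫ g, G2 (En a h (cc ν N t) g) (f x y) ∂(γ (KK ν N))) volume 0 1 :=
      (continuous_finsetSum _ fun x _ => continuous_finsetSum _ fun y _ =>
        continuous_const.mul (cont x y)).intervalIntegrable 0 1
    rw [intervalIntegral.integral_sub (intervalIntegrable_const) (i2.const_mul _)]
    simp only [intervalIntegral.integral_const_mul]
    rw [intervalIntegral.integral_finsetSum fun x _ => i1 x]
    congr 1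
    · simp
    · congr 1
      unfold adjSum
      refine Finset.sum_congr rfl fun x _ => ?_
      rw [intervalIntegral.integral_finsetSum fun y _ => i0 x y]
      refine Finset.sum_congr rfl fun y _ => ?_
      rw [intervalIntegral.integral_const_mul]
      split_ifs
      · rfl
      · simp
  have hmain := interp_app ν N Nv α q β b
  rw [← ha, ← hh, hI, ha, hh, t0 ν N Nv hle α q β b, ← ha, ← hh] at hmain
  -- the first term
  have hfirst : (∫ ξ, (1 / (N:ℝ)) * Real.log (Z ν N Nv α q β 1 b ξ 0) ∂(μW ν N)) =
      (1 / (N:ℝ)) * (∫ g, log (∑ σ, exp (En a h (cc ν N 1) g σ)) ∂(γ (KK ν N))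
        - (ν * N : ℕ) * log 2) := by
    rw [integral_const_mul]
    congr 1
    have hc1 : ∀ k, |cc ν N 1 k| ≤ 1 := by
      intro k
      rcases k with k | k <;> simp [cc]
    have hint := L_int a h (cc ν N 1) hc1
    have : ∫ g, log (∑ σ, exp (En a h (cc ν N 1) g σ)) ∂(γ (KK ν N)) - (ν * N : ℕ) * log 2 =
        ∫ g, (log (∑ σ, exp (En a h (cc ν N 1) g σ)) - (ν * N : ℕ) * log 2) ∂(γ (KK ν N)) := by
      rw [integral_sub hint (integrable_const _)]; simp
    have hint2 : Integrable (fun g => log (∑ σ, exp (En a h (cc ν N 1) g σ)) - (ν * N : ℕ) * log 2)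
        (γ (KK ν N)) := hint.sub (integrable_const _)
    rw [this, ← int_Φ ν N _ hint2]
    congr 1; ext ξ
    have e : ∀ η, log (∑ σ, exp (En a h (cc ν N 1) (Φ ν N (ξ, η)) σ)) - (ν * N : ℕ) * log 2 =
        log (Z ν N Nv α q β 1 b ξ 0) := by
      intro η
      have hz : ∑ σ, exp (En a h (cc ν N 1) (Φ ν N (ξ, η)) σ) =
          ∑ σ, bw ν N Nv α q β 1 b ξ 0 σ := by
        refine Finset.sum_congr rfl fun σ _ => ?_
        rw [ha, hh, En_eq]
        unfold bw hamT
        simp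
      have hzp := Zpos (En a h (cc ν N 1) (Φ ν N (ξ, η)))
      rw [hz] at hzp ⊢
      unfold Z
      rw [Real.log_div hzp.ne' (by positivity), Real.log_pow]
    simp only [e]
    simp
  have hsecond : ∀ x y, (∫ t in (0:ℝ)..1, ∫ ξ, ∫ η,
          gibbs2 ν N Nv α q β t b ξ η
            (fun σ τ => (ovl ν N Nv x σ τ - q x) * (ovl ν N Nv y σ τ - q y))
          ∂(μF ν N) ∂(μW ν N)) = I x y := by
    intro x y
    refine intervalIntegral.integral_congr fun t _ => ?_
    beta_reduce
    rw [← int_Φ ν N _ (G2_int a h (cc ν N t) (f x y))]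
    simp only [gibbs2, bw, G2, ha, hh, En_eq, f]
  simp only [hsecond]
  rw [hfirst]
  have hlast : (∑ x : Fin ν, α x *
        ∫ η, Real.log (Real.cosh (b x + β * η * Real.sqrt (Qv ν α q x)))
          ∂(gaussianReal 0 1)) = (1 / (N:ℝ)) * ∑ x, (Nv x : ℝ) *
        ∫ η, log (cosh (b x + β * η * √(Qv ν α q x))) ∂(gaussianReal 0 1) := by
    rw [Finset.mul_sum]
    refine Finset.sum_congr rfl fun x _ => ?_
    rw [hα x]; ring
  rw [hlast]
  change _ = _ + β ^ 2 / 2 * B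
  generalize adjSum ν (fun x y => α x * α y * I x y) = A at hmain ⊢
  generalize (∑ x, (Nv x : ℝ) *
        ∫ η, log (cosh (b x + β * η * √(Qv ν α q x))) ∂(gaussianReal 0 1)) = D at hmain ⊢
  generalize (∫ g, log (∑ σ, exp (En a h (cc ν N 1) g σ)) ∂(γ (KK ν N))) = L1 at hmain ⊢
  have : L1 = N * (β ^ 2 / 2) * B - N * (β ^ 2 / 2) * A + ((ν * N : ℕ) * log 2 + D) := by
    linarith
  rw [this]
  field_simp
  ring

end DRBM
end
end
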